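/- Let X and Y be vector spaces over ℝ and let f : X → Y satisfy: (i) f(0) = 0; (ii) for every line L ⊆ X, the image f '' L is either a point or a line in Y; and (iii) for every line L ⊆ X, if f '' L is a line in Y then the restriction of f to L is injective. If a, b ∈ X satisfy a ≠ 0, b ≠ 0, f(a) = 0, and f(b) ≠ 0, then f(a + b) = f(b) (equivalently, f(a + b) = f(a) + f(b)). -/

import Mathlib

def IsLine {X : Type*} [AddCommGroup X] [Module ℝ X] (L : Set X) : Prop :=
  ∃ o d : X, d ≠ 0 ∧ L = {x | ∃ r : ℝ, x = r • d + o}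

def IsPoint {X : Type*} (S : Set X) : Prop := ∃ p : X, S = {p}

/-!
The general fact is affine: if `f p = f q`, then `q -ᵥ p` is a period of `f`. Since `f` is constant
on the line `pq`, it suffices to treat a point `r` with `f r ≠ f p` (otherwise translate back from
`(q -ᵥ p) +ᵥ r`). Fix a third point `m` of the line `pr`, which exists as soon as there is a scalar
other than `0` and `1`. Every point `s` of the parallel to `pq` through `r` lies on a line joining
`m` to a point of `pq`. By injectivity on that line, `f s` differs from `f p`, and it lies on the
line through `f p` and `f r`. So `f` maps the parallel into a line with the point `f p` removed,
which contains no line, and is constant on it.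
-/

open AffineMap

theorem lineMap_lineMap_lineMap_inv {K V P : Type*} [Ring K] [AddCommGroup V] [Module K V]
    [AddTorsor V P] (u : Kˣ) (c : K) (p q r : P) :
    lineMap (lineMap p q c) (lineMap p r (↑u⁻¹ : K)) (u : K) =
      lineMap r ((q -ᵥ p) +ᵥ r) ((1 - u) * c) := by
  obtain ⟨v, rfl⟩ : ∃ v : V, v +ᵥ p = q := ⟨q -ᵥ p, vsub_vadd q p⟩
  obtain ⟨w, rfl⟩ : ∃ w : V, w +ᵥ p = r := ⟨r -ᵥ p, vsub_vadd r p⟩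
  simp only [lineMap_apply, vadd_vsub_vadd_cancel_right, vadd_vsub]
  simp only [smul_sub, smul_smul, Units.mul_inv, one_smul, vadd_vadd, sub_mul, one_mul, sub_smul]
  congr 1
  abel

section AffineLine

variable (K : Type*) {V P : Type*} [DivisionRing K] [AddCommGroup V] [Module K V] [AddTorsor V P]

/-- A line of an affine space over a division ring: the affine span of two distinct points. -/
def IsAffineLine (S : Set P) : Prop :=
  ∃ p q : P, p ≠ q ∧ S = line[K, p, q]

variable {K}

theorem IsAffineLine.eq_line {S : Set P} (hS : IsAffineLine K S) {p q : P} (hp : p ∈ S)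
    (hq : q ∈ S) (hpq : p ≠ q) : S = line[K, p, q] := by
  obtain ⟨a, b, -, rfl⟩ := hS
  rw [affineSpan_pair_eq_of_mem_of_mem_of_ne hp hq hpq]

theorem isLine_iff_isAffineLine {X : Type*} [AddCommGroup X] [Module ℝ X] {S : Set X} :
    IsLine S ↔ IsAffineLine ℝ S := by
  have line_eq (o d : X) : (line[ℝ, o, d + o] : Set X) = {x | ∃ r : ℝ, x = r • d + o} := by
    ext x
    simp [mem_affineSpan_pair_iff_exists_lineMap_eq, lineMap_apply, eq_comm]
  constructor
  · rintro ⟨o, d, hd, rfl⟩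
    exact ⟨o, d + o, by simpa using hd, (line_eq o d).symm⟩
  · rintro ⟨p, q, hpq, rfl⟩
    exact ⟨p, q - p, sub_ne_zero.mpr hpq.symm, by rw [← line_eq, sub_add_cancel]⟩

end AffineLine

section LineMaps

variable (K L : Type*) {V W P Q : Type*} [DivisionRing K] [DivisionRing L]
  [AddCommGroup V] [Module K V] [AddTorsor V P] [AddCommGroup W] [Module L W] [AddTorsor W Q]

/-- A map of affine spaces, possibly over different division rings, that sends every line to a
point or bijectively onto a line. -/
structure IsLineMap (f : P → Q) : Prop where
  isPoint_or_isAffineLine_image :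
    ∀ S : Set P, IsAffineLine K S → IsPoint (f '' S) ∨ IsAffineLine L (f '' S)
  injOn : ∀ S : Set P, IsAffineLine K S → IsAffineLine L (f '' S) → Set.InjOn f S

variable {K L} {f : P → Q} {p q r s : P}

namespace IsLineMap

theorem map_eq_of_mem_line (hf : IsLineMap K L f) (hpq : f p = f q) (hs : s ∈ line[K, p, q]) :
    f s = f p := by
  rcases eq_or_ne p q with rfl | hne
  · obtain rfl : s = p := by simpa using hs
    rfl
  have hline : IsAffineLine K (line[K, p, q] : Set P) := ⟨p, q, hne, rfl⟩
  have hp := left_mem_affineSpan_pair K p q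
  rcases hf.isPoint_or_isAffineLine_image _ hline with ⟨y, hy⟩ | himage
  · have map_eq {t : P} (ht : t ∈ line[K, p, q]) : f t = y := by
      simpa only [hy, Set.mem_singleton_iff] using Set.mem_image_of_mem f ht
    exact (map_eq hs).trans (map_eq hp).symm
  · exact absurd (hf.injOn _ hline himage hp (right_mem_affineSpan_pair K p q) hpq) hne

theorem isAffineLine_image_line (hf : IsLineMap K L f) (hpq : f p ≠ f q) :
    IsAffineLine L (f '' line[K, p, q]) := by
  refine (hf.isPoint_or_isAffineLine_image _ ⟨p, q, ne_of_apply_ne f hpq, rfl⟩).resolve_left ?_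
  rintro ⟨y, hy⟩
  have hsub : (f '' line[K, p, q]).Subsingleton := hy ▸ Set.subsingleton_singleton
  exact hpq (hsub (Set.mem_image_of_mem f (left_mem_affineSpan_pair K p q))
    (Set.mem_image_of_mem f (right_mem_affineSpan_pair K p q)))

theorem injOn_line (hf : IsLineMap K L f) (hpq : f p ≠ f q) :
    Set.InjOn f (line[K, p, q] : Set P) :=
  hf.injOn _ ⟨p, q, ne_of_apply_ne f hpq, rfl⟩ (hf.isAffineLine_image_line hpq)

theorem image_line (hf : IsLineMap K L f) (hpq : f p ≠ f q) :
    f '' line[K, p, q] = line[L, f p, f q] :=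
  (hf.isAffineLine_image_line hpq).eq_line
    (Set.mem_image_of_mem f (left_mem_affineSpan_pair K p q))
    (Set.mem_image_of_mem f (right_mem_affineSpan_pair K p q)) hpq

theorem map_lineMap_mem_line (hf : IsLineMap K L f) (hpq : f p ≠ f q) (c : K) :
    f (lineMap p q c) ∈ line[L, f p, f q] := by
  rw [← SetLike.mem_coe, ← hf.image_line hpq]
  exact Set.mem_image_of_mem f (lineMap_mem_affineSpan_pair c p q)

theorem map_lineMap_ne_left (hf : IsLineMap K L f) (hpq : f p ≠ f q) {c : K} (hc : c ≠ 0) :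
    f (lineMap p q c) ≠ f p := by
  intro h
  have hcp : lineMap p q c = p := hf.injOn_line hpq (lineMap_mem_affineSpan_pair c p q)
    (left_mem_affineSpan_pair K p q) h
  exact (lineMap_eq_left_iff.mp hcp).elim (ne_of_apply_ne f hpq) hc

theorem map_mem_line_and_ne_of_mem_parallel [Nontrivial Kˣ] (hf : IsLineMap K L f)
    (hpq : f p = f q) (hpr : f p ≠ f r) (hs : s ∈ line[K, r, (q -ᵥ p) +ᵥ r]) :
    f s ∈ line[L, f p, f r] ∧ f s ≠ f p := by
  obtain ⟨c, rfl⟩ := mem_affineSpan_pair_iff_exists_lineMap_eq.mp hs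
  obtain ⟨u, hu⟩ := exists_ne (1 : Kˣ)
  have hu' : (1 - u : K) ≠ 0 := sub_ne_zero.mpr (by simpa [eq_comm] using hu)
  set m : P := lineMap p r (↑u⁻¹ : K)
  set z : P := lineMap p q ((1 - u : K)⁻¹ * c)
  have hs_eq : lineMap r ((q -ᵥ p) +ᵥ r) c = lineMap z m (u : K) := by
    rw [lineMap_lineMap_lineMap_inv, mul_inv_cancel_left₀ hu']
  have hz : f z = f p := hf.map_eq_of_mem_line hpq (lineMap_mem_affineSpan_pair _ p q)
  have hm : f m ≠ f p := hf.map_lineMap_ne_left hpr u⁻¹.ne_zero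
  have hzm : f z ≠ f m := hz ▸ hm.symm
  have hm_mem : f m ∈ line[L, f p, f r] := hf.map_lineMap_mem_line hpr _
  rw [hs_eq]
  constructor
  · rw [← affineSpan_pair_eq_of_right_mem_of_ne hm_mem hm, ← hz]
    exact hf.map_lineMap_mem_line hzm u
  · rw [← hz]
    exact hf.map_lineMap_ne_left hzm u.ne_zero

theorem map_vsub_vadd_of_ne [Nontrivial Kˣ] (hf : IsLineMap K L f) (hpq : f p = f q)
    (hpr : f p ≠ f r) : f ((q -ᵥ p) +ᵥ r) = f r := by
  by_contra! hne
  have hmem : f ((q -ᵥ p) +ᵥ r) ∈ line[L, f p, f r] :=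
    (hf.map_mem_line_and_ne_of_mem_parallel hpq hpr (right_mem_affineSpan_pair K _ _)).1
  have himage : f '' line[K, r, (q -ᵥ p) +ᵥ r] = line[L, f p, f r] := by
    rw [hf.image_line hne.symm, affineSpan_pair_eq_of_mem_of_mem_of_ne
      (right_mem_affineSpan_pair L _ _) hmem hne.symm]
  obtain ⟨s, hs, hsp⟩ : f p ∈ f '' line[K, r, (q -ᵥ p) +ᵥ r] :=
    himage ▸ left_mem_affineSpan_pair L (f p) (f r)
  exact (hf.map_mem_line_and_ne_of_mem_parallel hpq hpr hs).2 hsp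

end IsLineMap

theorem add_of_zero_value_general [Nontrivial Kˣ] (hf : IsLineMap K L f) (hpq : f p = f q)
    (r : P) : f ((q -ᵥ p) +ᵥ r) = f r := by
  by_cases hr : f p = f r
  · by_contra! hne
    have hback := hf.map_vsub_vadd_of_ne hpq.symm (r := (q -ᵥ p) +ᵥ r)
      (by rw [← hpq, hr]; exact hne.symm)
    rw [← neg_vsub_eq_vsub_rev q p, neg_vadd_vadd] at hback
    exact hne hback.symm
  · exact hf.map_vsub_vadd_of_ne hpq hr

end LineMaps

theorem add_of_zero_value
    {X Y : Type*} [AddCommGroup X] [Module ℝ X] [AddCommGroup Y] [Module ℝ Y]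
    (f : X → Y) (h0 : f 0 = 0)
    (h1 : ∀ L : Set X, IsLine L → IsPoint (f '' L) ∨ IsLine (f '' L))
    (h2 : ∀ L : Set X, IsLine L → IsLine (f '' L) → Set.InjOn f L)
    (a b : X) (ha : a ≠ 0) (hb : b ≠ 0) (hfa : f a = 0) (hfb : f b ≠ 0) :
    f (a + b) = f b ∧ f (a + b) = f a + f b := by
  simp only [isLine_iff_isAffineLine] at h1 h2
  have : Nontrivial ℝˣ := ⟨-1, 1, by norm_num [Units.ext_iff]⟩
  have hab : f (a + b) = f b := by
    simpa using add_of_zero_value_general ⟨h1, h2⟩ (h0.trans hfa.symm) b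
  exact ⟨hab, by rw [hab, hfa, zero_add]⟩
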